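/- arXiv:0901.2840 — 3 statements merged into one kernel-verified Lean document; each statement's English description precedes it below -/
import Mathlib

section
/- Let f, g : (0,1] → (0,∞) and let p, c > 0 be constants such that f is nondecreasing, the function t ↦ log g(e^{-t}) is bounded and uniformly continuous on [0,∞), and such that for every r in some dense subset D of (0,1) one has t^{-p} f(t) g(t) → c as t → 0 along the geometric sequence (r^n)_{n∈ℕ}. Then t^{-p} f(t) g(t) → c as t → 0 along all of (0,1). -/
open Filter

/-!
When `t` increases by a factor close to `1`, each factor of `φ t = t ^ (-p) * f t * g t` drops at
most by a factor close to `1`: `f` because it is nondecreasing, the other two because their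
logarithms are uniformly continuous in `log t`. Hence the same is true of `φ`. If `r` is close to
`1` and `r ^ (n + 1) < t ≤ r ^ n`, this bounds `φ t` above by nearly `φ (r ^ n)` and below by nearly
`φ (r ^ (n + 1))`, and both of these tend to `c`.
-/

open Set Topology

lemma frequently_mem_nhdsLT_of_Ioo_subset_closure {α : Type*} [TopologicalSpace α] [LinearOrder α]
    [OrderTopology α] [DenselyOrdered α] {a b : α} {D : Set α} (hab : a < b) (hD : D ⊆ Iio b)
    (hdense : Ioo a b ⊆ closure D) : ∃ᶠ x in 𝓝[<] b, x ∈ D := by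
  have hb : b ∈ closure D := by
    refine closure_minimal hdense isClosed_closure ?_
    rw [closure_Ioo hab.ne]
    exact right_mem_Icc.2 hab.le
  rw [frequently_nhdsWithin_iff]
  exact (mem_closure_iff_frequently.1 hb).mono fun x hx => ⟨hx, hD hx⟩

section OrderedField

variable {K : Type*} [Field K] [LinearOrder K] [IsStrictOrderedRing K]

lemma exists_one_lt_mul_lt {a b : K} (hab : a < b) : ∃ ρ > 1, ρ * a < b := by
  rcases le_or_gt a 0 with ha | ha
  · exact ⟨2, one_lt_two, by linarith⟩
  · obtain ⟨ρ, hρ, hρb⟩ := exists_between ((one_lt_div ha).2 hab)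
    exact ⟨ρ, hρ, (lt_div_iff₀ ha).1 hρb⟩

lemma eventually_nhdsGT_zero_exists_mem_Ioc_pow [Archimedean K] [TopologicalSpace K]
    [OrderTopology K] {r : K} (hr : r ∈ Ioo 0 1) {P : ℕ → Prop} (hP : ∀ᶠ n in atTop, P n) :
    ∀ᶠ t in 𝓝[>] 0, ∃ n, P n ∧ t ∈ Ioc (r ^ (n + 1)) (r ^ n) := by
  obtain ⟨N, hN⟩ := eventually_atTop.1 hP
  filter_upwards [Ioc_mem_nhdsGT (pow_pos hr.1 N)] with t ht
  obtain ⟨n, hn, hn'⟩ := exists_nat_pow_near_of_lt_one ht.1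
    (ht.2.trans (pow_le_one₀ hr.1.le hr.2.le)) hr.1 hr.2
  have hNn : N < n + 1 := (pow_lt_pow_iff_right_of_lt_one₀ hr.1 hr.2).1 (hn.trans_le ht.2)
  exact ⟨n, hN n (Nat.le_of_lt_succ hNn), hn, hn'⟩

end OrderedField

/-- Schmidt's Tauberian condition of slow decrease on `(0, 1]`: `φ y` is not much smaller than `φ x`
when `y` exceeds `x` by a factor close to `1`. Unlike in the classical definition, the values of `φ`
are compared by their ratio instead of their difference, and uniformly on `(0, 1]`. -/
def SlowlyDecreasing (φ : ℝ → ℝ) : Prop :=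
  ∀ ρ > 1, ∀ᶠ σ in 𝓝[<] (1 : ℝ), ∀ y ∈ Ioc 0 1, ∀ x ∈ Icc (σ * y) y, φ x ≤ ρ * φ y

namespace SlowlyDecreasing

lemma of_monotoneOn {f : ℝ → ℝ} (hf : MonotoneOn f (Ioc 0 1)) (hf₀ : ∀ t ∈ Ioc 0 1, 0 ≤ f t) :
    SlowlyDecreasing f := by
  intro ρ hρ
  filter_upwards [Ioo_mem_nhdsLT zero_lt_one] with σ hσ y hy x hx
  have hx₀ : 0 < x := (mul_pos hσ.1 hy.1).trans_le hx.1
  calc f x ≤ f y := hf ⟨hx₀, hx.2.trans hy.2⟩ hy hx.2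
    _ ≤ ρ * f y := le_mul_of_one_le_left (hf₀ y hy) hρ.le

lemma of_uniformContinuousOn_log {g : ℝ → ℝ} (hg₀ : ∀ t ∈ Ioc 0 1, 0 < g t)
    (hg : UniformContinuousOn (fun s => Real.log (g (Real.exp (-s)))) (Ici 0)) :
    SlowlyDecreasing g := by
  intro ρ hρ
  obtain ⟨δ, hδ, hgδ⟩ := Metric.uniformContinuousOn_iff.1 hg (Real.log ρ) (Real.log_pos hρ)
  have hexp : Real.exp (-δ) < 1 := Real.exp_lt_one_iff.2 (neg_lt_zero.2 hδ)
  filter_upwards [Ioo_mem_nhdsLT hexp] with σ hσ y hy x hx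
  have hσ₀ : 0 < σ := (Real.exp_pos _).trans hσ.1
  have hx₀ : 0 < x := (mul_pos hσ₀ hy.1).trans_le hx.1
  have hx₁ : x ≤ 1 := hx.2.trans hy.2
  have hdist : dist (-Real.log x) (-Real.log y) < δ := by
    have hσδ : -δ < Real.log σ := (Real.lt_log_iff_exp_lt hσ₀).2 hσ.1
    have hlower : Real.log σ + Real.log y ≤ Real.log x := by
      rw [← Real.log_mul hσ₀.ne' hy.1.ne']
      exact Real.log_le_log (mul_pos hσ₀ hy.1) hx.1
    have hupper : Real.log x ≤ Real.log y := Real.log_le_log hx₀ hx.2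
    rw [Real.dist_eq, abs_lt]
    constructor <;> linarith
  have hlog : Real.log (g x) - Real.log (g y) < Real.log ρ := by
    have hdist_log := hgδ _ (neg_nonneg.2 (Real.log_nonpos hx₀.le hx₁))
      _ (neg_nonneg.2 (Real.log_nonpos hy.1.le hy.2)) hdist
    simp only [neg_neg, Real.exp_log hx₀, Real.exp_log hy.1] at hdist_log
    exact (le_abs_self _).trans_lt hdist_log
  have hgy := hg₀ y hy
  have hρ₀ : 0 < ρ := zero_lt_one.trans hρ
  rw [← Real.log_le_log_iff (hg₀ x ⟨hx₀, hx₁⟩) (mul_pos hρ₀ hgy), Real.log_mul hρ₀.ne' hgy.ne']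
  linarith

lemma rpow (q : ℝ) : SlowlyDecreasing fun t => t ^ q := by
  refine of_uniformContinuousOn_log (fun t ht => Real.rpow_pos_of_pos ht.1 q) ?_
  have hlog (s : ℝ) : Real.log (Real.exp (-s) ^ q) = -q * s := by
    rw [Real.log_rpow (Real.exp_pos _), Real.log_exp, mul_neg, neg_mul]
  simp only [hlog]
  exact (uniformContinuous_const_smul (-q)).uniformContinuousOn

lemma mul {φ ψ : ℝ → ℝ} (hφ : SlowlyDecreasing φ) (hψ : SlowlyDecreasing ψ)
    (hφ₀ : ∀ t ∈ Ioc 0 1, 0 ≤ φ t) (hψ₀ : ∀ t ∈ Ioc 0 1, 0 ≤ ψ t) :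
    SlowlyDecreasing fun t => φ t * ψ t := by
  intro ρ hρ
  have hsqrt : 1 < √ρ := Real.lt_sqrt_of_sq_lt (by simpa using hρ)
  filter_upwards [hφ _ hsqrt, hψ _ hsqrt, Ioo_mem_nhdsLT zero_lt_one] with σ hσφ hσψ hσ y hy x hx
  have hx₀ : 0 < x := (mul_pos hσ.1 hy.1).trans_le hx.1
  calc φ x * ψ x ≤ (√ρ * φ y) * (√ρ * ψ y) :=
        mul_le_mul (hσφ y hy x hx) (hσψ y hy x hx) (hψ₀ x ⟨hx₀, hx.2.trans hy.2⟩)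
          (mul_nonneg (Real.sqrt_nonneg ρ) (hφ₀ y hy))
    _ = (√ρ * √ρ) * (φ y * ψ y) := mul_mul_mul_comm ..
    _ = ρ * (φ y * ψ y) := by rw [Real.mul_self_sqrt (zero_le_one.trans hρ.le)]

variable {φ : ℝ → ℝ} {ρ c : ℝ}

lemma eventually_geometric_bounds (hφ : SlowlyDecreasing φ) (hρ : 1 < ρ) :
    ∀ᶠ r in 𝓝[<] (1 : ℝ), r ∈ Ioo 0 1 ∧ ∀ n : ℕ, ∀ t ∈ Ioc (r ^ (n + 1)) (r ^ n),
      φ t ≤ ρ * φ (r ^ n) ∧ φ (r ^ (n + 1)) ≤ ρ * φ t := by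
  filter_upwards [hφ ρ hρ, Ioo_mem_nhdsLT zero_lt_one] with r hbound hr
  refine ⟨hr, fun n t ht => ?_⟩
  have hpow : r ^ n ∈ Ioc 0 1 := ⟨pow_pos hr.1 n, pow_le_one₀ hr.1.le hr.2.le⟩
  have ht₀ : 0 < t := (pow_pos hr.1 (n + 1)).trans ht.1
  rw [pow_succ'] at ht ⊢
  exact ⟨hbound _ hpow t ⟨ht.1.le, ht.2⟩, hbound t ⟨ht₀, ht.2.trans hpow.2⟩ _
    ⟨mul_le_mul_of_nonneg_left ht.2 hr.1.le, ht.1.le⟩⟩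

theorem tendsto_nhdsGT_zero (hφ : SlowlyDecreasing φ)
    (hlim : ∃ᶠ r in 𝓝[<] (1 : ℝ), Tendsto (fun n : ℕ => φ (r ^ n)) atTop (𝓝 c)) :
    Tendsto φ (𝓝[>] 0) (𝓝 c) := by
  have hratio {ρ : ℝ} (hρ : 1 < ρ) : ∃ r, Tendsto (fun n : ℕ => φ (r ^ n)) atTop (𝓝 c) ∧
      r ∈ Ioo 0 1 ∧ ∀ n : ℕ, ∀ t ∈ Ioc (r ^ (n + 1)) (r ^ n),
        φ t ≤ ρ * φ (r ^ n) ∧ φ (r ^ (n + 1)) ≤ ρ * φ t :=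
    (hlim.and_eventually (hφ.eventually_geometric_bounds hρ)).exists
  refine tendsto_order.2 ⟨fun b hb => ?_, fun b hb => ?_⟩
  · obtain ⟨ρ, hρ, hρb⟩ := exists_one_lt_mul_lt hb
    obtain ⟨r, hr_lim, hr, hbounds⟩ := hratio hρ
    have hlower : ∀ᶠ n in atTop, ρ * b < φ (r ^ (n + 1)) :=
      (hr_lim.comp (tendsto_add_atTop_nat 1)).eventually_const_lt hρb
    filter_upwards [eventually_nhdsGT_zero_exists_mem_Ioc_pow hr hlower] with t ⟨n, hn, ht⟩
    exact lt_of_mul_lt_mul_left (hn.trans_le (hbounds n t ht).2) (zero_le_one.trans hρ.le)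
  · obtain ⟨ρ, hρ, hρb⟩ := exists_one_lt_mul_lt hb
    obtain ⟨r, hr_lim, hr, hbounds⟩ := hratio hρ
    have hupper : ∀ᶠ n in atTop, ρ * φ (r ^ n) < b :=
      (hr_lim.const_mul ρ).eventually_lt_const hρb
    filter_upwards [eventually_nhdsGT_zero_exists_mem_Ioc_pow hr hupper] with t ⟨n, hn, ht⟩
    exact (hbounds n t ht).1.trans_lt hn

end SlowlyDecreasing

theorem interpolation_principle_general {f g : ℝ → ℝ} {p c : ℝ}
    (hf_nonneg : ∀ t ∈ Ioc 0 1, 0 ≤ f t) (hg_pos : ∀ t ∈ Ioc 0 1, 0 < g t)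
    (hf_mono : MonotoneOn f (Ioc 0 1))
    (hg_uc : UniformContinuousOn (fun s => Real.log (g (Real.exp (-s)))) (Ici 0))
    (hlim : ∃ᶠ r in 𝓝[<] (1 : ℝ),
      Tendsto (fun n : ℕ => (r ^ n) ^ (-p) * f (r ^ n) * g (r ^ n)) atTop (𝓝 c)) :
    Tendsto (fun t => t ^ (-p) * f t * g t) (𝓝[>] 0) (𝓝 c) := by
  have hrpow_nonneg : ∀ t ∈ Ioc (0 : ℝ) 1, 0 ≤ t ^ (-p) := fun t ht => Real.rpow_nonneg ht.1.le _
  have hrpow_f : SlowlyDecreasing fun t => t ^ (-p) * f t :=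
    (SlowlyDecreasing.rpow (-p)).mul (.of_monotoneOn hf_mono hf_nonneg) hrpow_nonneg hf_nonneg
  have hφ : SlowlyDecreasing fun t => t ^ (-p) * f t * g t :=
    hrpow_f.mul (.of_uniformContinuousOn_log hg_pos hg_uc)
      (fun t ht => mul_nonneg (hrpow_nonneg t ht) (hf_nonneg t ht)) fun t ht => (hg_pos t ht).le
  exact hφ.tendsto_nhdsGT_zero hlim

/-- **Interpolation principle (Lemma 2.3).**
Let `f, g : (0,1] → (0,∞)` and `p, c > 0` with `f` nondecreasing, `t ↦ log g(e^{-t})`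
bounded and uniformly continuous on `[0,∞)`, and `t^{-p} f(t) g(t) → c` as `t → 0`
along every geometric sequence `(r^n)` with ratio `r` in a dense subset `D` of `(0,1)`.
Then `t^{-p} f(t) g(t) → c` as `t → 0` along all of `(0,1)`. -/
theorem interpolation_principle
    (f g : ℝ → ℝ) (p c : ℝ) (hp : 0 < p) (hc : 0 < c)
    (hf_pos : ∀ t ∈ Set.Ioc (0:ℝ) 1, 0 < f t)
    (hg_pos : ∀ t ∈ Set.Ioc (0:ℝ) 1, 0 < g t)
    (hf_mono : MonotoneOn f (Set.Ioc (0:ℝ) 1))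
    (hg_bdd : ∃ M : ℝ, ∀ t : ℝ, 0 ≤ t → |Real.log (g (Real.exp (-t)))| ≤ M)
    (hg_uc : UniformContinuousOn (fun t => Real.log (g (Real.exp (-t)))) (Set.Ici (0:ℝ)))
    (D : Set ℝ) (hD : D ⊆ Set.Ioo 0 1) (hDdense : Set.Ioo (0:ℝ) 1 ⊆ closure D)
    (hlim : ∀ r ∈ D, Tendsto (fun n : ℕ => (r ^ n) ^ (-p) * f (r ^ n) * g (r ^ n))
      atTop (nhds c)) :
    Tendsto (fun t : ℝ => t ^ (-p) * f t * g t) (nhdsWithin 0 (Set.Ioo 0 1)) (nhds c) := by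
  have hfreq := frequently_mem_nhdsLT_of_Ioo_subset_closure one_pos (fun _ hr => (hD hr).2) hDdense
  exact (interpolation_principle_general (fun t ht => (hf_pos t ht).le) hg_pos hf_mono hg_uc
    (hfreq.mono hlim)).mono_left (nhdsWithin_mono 0 Ioo_subset_Ioi_self)
end

section
/- For every dimension d ≥ 1 and every t > 0 there exists a constant C > 0 such that p_t(x + y) ≤ C · p_{t+h}(x) for all x, y ∈ ℝ^d and all h with 0 < h ≤ t and |y| ≤ h. -/
open Filter MeasureTheory

/-- The standard Gaussian density `p_t(x) = (2πt)^{-d/2} exp(-|x|²/(2t))` on `ℝ^d`. -/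
noncomputable def gaussDensity (d : ℕ) (t : ℝ) (x : EuclideanSpace ℝ (Fin d)) : ℝ :=
  (2 * Real.pi * t) ^ (-(d : ℝ) / 2) * Real.exp (-‖x‖ ^ 2 / (2 * t))

/-!
The heat kernel satisfies a parabolic Harnack inequality: for `t, h > 0`,
`p_t(x + y) ≤ ((t + h) / t)^{d/2} exp(|y|² / (2h)) p_{t+h}(x)`.
The power is the ratio of the normalizing factors, and the exponents compare by Sedrakyan's
inequality `|x|² / (t + h) ≤ |x + y|² / t + |y|² / h`. The Harnack factor is bounded as long as
`h` and `|y|² / h` are, and `|y| ≤ h ≤ t` gives `|y|² / h ≤ t`.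
-/

theorem add_sq_div_add_le {R : Type*} [Semifield R] [LinearOrder R] [IsStrictOrderedRing R]
    [ExistsAddOfLE R] (a b : R) {s t : R} (hs : 0 < s) (ht : 0 < t) :
    (a + b) ^ 2 / (s + t) ≤ a ^ 2 / s + b ^ 2 / t := by
  have hpos : ∀ i ∈ Finset.univ, 0 < ![s, t] i := by simp [Fin.forall_fin_two, hs, ht]
  simpa using Finset.sq_sum_div_le_sum_sq_div Finset.univ ![a, b] hpos

theorem norm_sub_sq_div_add_le {E : Type*} [SeminormedAddGroup E] (u v : E) {s t : ℝ}
    (hs : 0 < s) (ht : 0 < t) :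
    ‖u - v‖ ^ 2 / (s + t) ≤ ‖u‖ ^ 2 / s + ‖v‖ ^ 2 / t :=
  calc
    ‖u - v‖ ^ 2 / (s + t) ≤ (‖u‖ + ‖v‖) ^ 2 / (s + t) := by gcongr; exact norm_sub_le u v
    _ ≤ ‖u‖ ^ 2 / s + ‖v‖ ^ 2 / t := add_sq_div_add_le _ _ hs ht

theorem div_rpow_mul_rpow_neg {a b : ℝ} (ha : 0 ≤ a) (hb : 0 < b) (r : ℝ) :
    (b / a) ^ r * b ^ (-r) = a ^ (-r) := by
  rw [Real.div_rpow hb.le ha, Real.rpow_neg hb.le, Real.rpow_neg ha, div_mul_eq_mul_div,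
    mul_inv_cancel₀ (Real.rpow_pos_of_pos hb r).ne', one_div]

theorem gaussDensity_nonneg (d : ℕ) {t : ℝ} (ht : 0 ≤ t) (x : EuclideanSpace ℝ (Fin d)) :
    0 ≤ gaussDensity d t x := by
  unfold gaussDensity
  positivity

theorem gaussDensity_harnack {d : ℕ} {t h : ℝ} (ht : 0 < t) (hh : 0 < h)
    (x y : EuclideanSpace ℝ (Fin d)) :
    gaussDensity d t (x + y) ≤
      ((t + h) / t) ^ ((d : ℝ) / 2) * Real.exp (‖y‖ ^ 2 / h / 2) * gaussDensity d (t + h) x := by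
  have normalization : (2 * Real.pi * t) ^ (-(d : ℝ) / 2) =
      ((t + h) / t) ^ ((d : ℝ) / 2) * (2 * Real.pi * (t + h)) ^ (-(d : ℝ) / 2) := by
    rw [← mul_div_mul_left (t + h) t Real.two_pi_pos.ne', neg_div,
      div_rpow_mul_rpow_neg (by positivity) (by positivity)]
  have exponent : -‖x + y‖ ^ 2 / (2 * t) ≤ ‖y‖ ^ 2 / h / 2 + -‖x‖ ^ 2 / (2 * (t + h)) := by
    have sedrakyan := norm_sub_sq_div_add_le (x + y) y ht hh
    rw [add_sub_cancel_right] at sedrakyan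
    simp only [neg_div, mul_comm (2 : ℝ), ← div_div]
    linarith
  calc
    gaussDensity d t (x + y)
      ≤ ((t + h) / t) ^ ((d : ℝ) / 2) * (2 * Real.pi * (t + h)) ^ (-(d : ℝ) / 2) *
          Real.exp (‖y‖ ^ 2 / h / 2 + -‖x‖ ^ 2 / (2 * (t + h))) := by
        rw [gaussDensity, normalization]
        gcongr
    _ = ((t + h) / t) ^ ((d : ℝ) / 2) * Real.exp (‖y‖ ^ 2 / h / 2) *
          gaussDensity d (t + h) x := by
        rw [gaussDensity, Real.exp_add]
        ring

theorem gaussDensity_shift_le_general (d : ℕ) {t T : ℝ} (ht : 0 < t) (hT : 0 ≤ T) (K : ℝ) :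
    ∃ C : ℝ, 0 < C ∧ ∀ (x y : EuclideanSpace ℝ (Fin d)) (h : ℝ),
      0 < h → h ≤ T → ‖y‖ ^ 2 ≤ K * h →
      gaussDensity d t (x + y) ≤ C * gaussDensity d (t + h) x := by
  refine ⟨((t + T) / t) ^ ((d : ℝ) / 2) * Real.exp (K / 2), by positivity, ?_⟩
  intro x y h hh hhT hy
  have hyK : ‖y‖ ^ 2 / h ≤ K := (div_le_iff₀ hh).mpr hy
  have hp : 0 ≤ gaussDensity d (t + h) x := gaussDensity_nonneg d (by positivity) x
  exact (gaussDensity_harnack ht hh x y).trans (by gcongr)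

/-- **Lemma 3.1.** For every `d ≥ 1` and `t > 0` there is a constant `C > 0` with
`p_t(x+y) ≤ C · p_{t+h}(x)` whenever `0 < h ≤ t` and `|y| ≤ h`. -/
theorem gaussDensity_shift_le (d : ℕ) (hd : 1 ≤ d) (t : ℝ) (ht : 0 < t) :
    ∃ C : ℝ, 0 < C ∧ ∀ (x y : EuclideanSpace ℝ (Fin d)) (h : ℝ),
      0 < h → h ≤ t → ‖y‖ ≤ h →
      gaussDensity d t (x + y) ≤ C * gaussDensity d (t + h) x := by
  obtain ⟨C, hC, hbound⟩ := gaussDensity_shift_le_general d ht ht.le t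
  refine ⟨C, hC, fun x y h hh hht hy ↦ hbound x y h hh hht ?_⟩
  calc
    ‖y‖ ^ 2 = ‖y‖ * ‖y‖ := sq _
    _ ≤ t * h := mul_le_mul (hy.trans hht) hy (norm_nonneg y) ht.le
end

section
/- Let μ be a σ-finite Borel measure on ℝ^d. Then the following are equivalent: (a) μ p_t < ∞ for every t > 0; (b) for every t > 0, the measure on ℝ^d with density x ↦ (μ * p_t)(x) with respect to Lebesgue measure is locally finite, i.e. assigns finite mass to every bounded Borel set. -/
open Filter MeasureTheory

/-!
Finiteness of `μ * p_t` at a point does not depend on the point, up to an arbitrarily small change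
of `t`: for `t < s`, the inequality `(a + r)² / s ≤ a² / t + r² / (s - t)` bounds `p_t(x - u)` by a
constant times `p_s(y - u)`, uniformly in `u` and in `|x - y| ≤ r`. Since `μ p_t` is the value of
`μ * p_t` at `0`, finiteness at `0` propagates to a uniform bound on every bounded set. Conversely,
a function with finite integral over a set of positive measure is finite at one of its points, and
finiteness at that point propagates to `0`.
-/

open Bornology ENNReal

lemma add_sq_div_add_le_s2 {a b p q : ℝ} (hp : 0 < p) (hq : 0 < q) :
    (a + b) ^ 2 / (p + q) ≤ a ^ 2 / p + b ^ 2 / q := by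
  simpa [Fin.sum_univ_two] using
    Finset.sq_sum_div_le_sum_sq_div Finset.univ ![a, b] (g := ![p, q]) (by simp [hp, hq])

lemma exists_mem_lt_top_of_setLIntegral_lt_top {X : Type*} [MeasurableSpace X] {ν : Measure X}
    {B : Set X} {f : X → ℝ≥0∞} (hB : MeasurableSet B) (hνB : ν B ≠ 0)
    (hf : ∫⁻ x in B, f x ∂ν < ⊤) : ∃ x ∈ B, f x < ⊤ := by
  by_contra! h
  have htop : ∫⁻ _ in B, ⊤ ∂ν ≤ ∫⁻ x in B, f x ∂ν := setLIntegral_mono' hB h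
  rw [setLIntegral_const, top_mul hνB] at htop
  exact htop.not_gt hf

section GaussKernel

variable {X : Type*} [PseudoMetricSpace X] {c : ℝ → ℝ} {t s r : ℝ} {x y : X}

/-- The Gaussian kernel `c(t) exp(-dist(x, u)² / (2t))` of a pseudometric space. The prefactor `c`
is arbitrary; `c(t) = (2πt)^{-d/2}` gives `p_t(x - u)` on `ℝ^d`. -/
noncomputable def gaussKernel (c : ℝ → ℝ) (t : ℝ) (x u : X) : ℝ :=
  c t * Real.exp (-dist x u ^ 2 / (2 * t))

lemma neg_dist_sq_div_le (u : X) (ht : 0 < t) (hts : t < s) (hxy : dist x y ≤ r) :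
    -dist x u ^ 2 / (2 * t) ≤ r ^ 2 / (2 * (s - t)) + -dist y u ^ 2 / (2 * s) := by
  have htriangle : dist y u ≤ dist x u + r := by
    linarith [dist_triangle_left y u x]
  have hsq : dist y u ^ 2 / (2 * s) ≤ dist x u ^ 2 / (2 * t) + r ^ 2 / (2 * (s - t)) :=
    calc dist y u ^ 2 / (2 * s) ≤ (dist x u + r) ^ 2 / (2 * t + 2 * (s - t)) := by
          rw [show 2 * t + 2 * (s - t) = 2 * s by ring]
          gcongr
          linarith
      _ ≤ dist x u ^ 2 / (2 * t) + r ^ 2 / (2 * (s - t)) :=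
          add_sq_div_add_le_s2 (by linarith) (by linarith)
  simp only [neg_div]
  linarith

lemma gaussKernel_le_mul_gaussKernel (u : X) (hct : 0 ≤ c t) (hcs : c s ≠ 0) (ht : 0 < t)
    (hts : t < s) (hxy : dist x y ≤ r) :
    gaussKernel c t x u ≤
      c t / c s * Real.exp (r ^ 2 / (2 * (s - t))) * gaussKernel c s y u :=
  calc gaussKernel c t x u
      ≤ c t * Real.exp (r ^ 2 / (2 * (s - t)) + -dist y u ^ 2 / (2 * s)) := by
        unfold gaussKernel
        gcongr
        exact neg_dist_sq_div_le u ht hts hxy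
    _ = c t / c s * Real.exp (r ^ 2 / (2 * (s - t))) * gaussKernel c s y u := by
        rw [gaussKernel, Real.exp_add]
        field_simp

variable [MeasurableSpace X] {μ ν : Measure X} {B : Set X}

/-- The convolution of `μ` with the Gaussian kernel, `(μ * p_t)(x)` on `ℝ^d`. It takes values in
`ℝ≥0∞` because the integral may diverge. -/
noncomputable def gaussConv (c : ℝ → ℝ) (t : ℝ) (μ : Measure X) (x : X) : ℝ≥0∞ :=
  ∫⁻ u, ENNReal.ofReal (gaussKernel c t x u) ∂μ

lemma gaussConv_le_mul_gaussConv (hct : 0 ≤ c t) (hcs : 0 < c s) (ht : 0 < t) (hts : t < s)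
    (hxy : dist x y ≤ r) :
    gaussConv c t μ x ≤
      ENNReal.ofReal (c t / c s * Real.exp (r ^ 2 / (2 * (s - t)))) * gaussConv c s μ y := by
  unfold gaussConv
  rw [← lintegral_const_mul' _ _ ofReal_ne_top]
  refine lintegral_mono fun u ↦ ?_
  rw [← ofReal_mul (by positivity)]
  exact ofReal_le_ofReal (gaussKernel_le_mul_gaussKernel u hct hcs.ne' ht hts hxy)

lemma gaussConv_lt_top_of_lt (hct : 0 ≤ c t) (hcs : 0 < c s) (ht : 0 < t) (hts : t < s)
    (hy : gaussConv c s μ y < ⊤) (x : X) : gaussConv c t μ x < ⊤ :=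
  (gaussConv_le_mul_gaussConv hct hcs ht hts le_rfl).trans_lt (mul_lt_top ofReal_lt_top hy)

lemma setLIntegral_gaussConv_lt_top (hct : 0 ≤ c t) (hcs : 0 < c s) (ht : 0 < t) (hts : t < s)
    (hy : gaussConv c s μ y < ⊤) (hB : MeasurableSet B) (hB_bdd : IsBounded B)
    (hνB : ν B < ⊤) : ∫⁻ x in B, gaussConv c t μ x ∂ν < ⊤ := by
  obtain ⟨r, hBr⟩ := hB_bdd.subset_closedBall y
  calc ∫⁻ x in B, gaussConv c t μ x ∂ν
      ≤ ∫⁻ _ in B, ENNReal.ofReal (c t / c s * Real.exp (r ^ 2 / (2 * (s - t)))) *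
          gaussConv c s μ y ∂ν :=
        setLIntegral_mono' hB fun x hx ↦ gaussConv_le_mul_gaussConv hct hcs ht hts (hBr hx)
    _ < ⊤ := by
        rw [setLIntegral_const]
        exact mul_lt_top (mul_lt_top ofReal_lt_top hy) hνB

theorem gaussMoment_iff_locallyFinite_general [OpensMeasurableSpace X]
    (hc : ∀ t, 0 < t → 0 < c t) (hν : ν ≠ 0) (hν_bdd : ∀ B, IsBounded B → ν B < ⊤) (o : X) :
    (∀ t, 0 < t → gaussConv c t μ o < ⊤) ↔
      ∀ t, 0 < t → ∀ B, MeasurableSet B → IsBounded B → ∫⁻ x in B, gaussConv c t μ x ∂ν < ⊤ := by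
  have hlt {t : ℝ} (ht : 0 < t) : t < 2 * t := by linarith
  have hpos {t : ℝ} (ht : 0 < t) : 0 < 2 * t := by linarith
  refine ⟨fun h t ht B hB hB_bdd ↦ ?_, fun h t ht ↦ ?_⟩
  · exact setLIntegral_gaussConv_lt_top (hc t ht).le (hc _ (hpos ht)) ht (hlt ht)
      (h _ (hpos ht)) hB hB_bdd (hν_bdd B hB_bdd)
  · obtain ⟨n, hn⟩ := exists_pos_ball o hν
    obtain ⟨x, -, hx⟩ := exists_mem_lt_top_of_setLIntegral_lt_top measurableSet_ball hn.ne'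
      (h _ (hpos ht) _ measurableSet_ball Metric.isBounded_ball)
    exact gaussConv_lt_top_of_lt (hc t ht).le (hc _ (hpos ht)) ht (hlt ht) hx o

end GaussKernel

/-- For a σ-finite Borel measure `μ` on `ℝ^d`, the condition `μ p_t < ∞` for all `t > 0`
is equivalent to the local finiteness (finiteness on all bounded Borel sets) of the measure
with Lebesgue density `x ↦ (μ * p_t)(x)`, for every `t > 0`. -/
theorem gaussMoment_iff_locallyFinite (d : ℕ)
    (μ : Measure (EuclideanSpace ℝ (Fin d))) [SigmaFinite μ] :
    (∀ t : ℝ, 0 < t → ∫⁻ u, ENNReal.ofReal (gaussDensity d t u) ∂μ < ⊤) ↔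
    (∀ t : ℝ, 0 < t → ∀ B : Set (EuclideanSpace ℝ (Fin d)), MeasurableSet B →
      Bornology.IsBounded B →
      ∫⁻ x in B, (∫⁻ u, ENNReal.ofReal (gaussDensity d t (x - u)) ∂μ) ∂volume < ⊤) := by
  simpa [gaussConv, gaussKernel, gaussDensity, dist_eq_norm] using
    gaussMoment_iff_locallyFinite_general (c := fun t ↦ (2 * Real.pi * t) ^ (-(d : ℝ) / 2))
      (μ := μ) (fun t ht ↦ by positivity) (NeZero.ne volume) (fun _ hB ↦ hB.measure_lt_top) 0
end
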